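/- arXiv:hep-th/0412327 — 2 statements merged into one kernel-verified Lean document; each statement's English description precedes it below -/
import Mathlib

section
/- The generating function for plane partitions weighted by total size and the size of the main diagonal partition equals the infinite product ∏_{n≥1} 1/(1 - Q q^n)^n; that is, ∑_π q^{|π|} Q^{|π(0)|} = ∏_{n=1}^∞ (1 - Q q^n)^{-n} as formal power series in q and Q. -/
/-- A plane partition: an array of non-negative integers, weakly decreasing along
rows and columns, with finite support (hence finite total size). -/
structure PlanePartition where
  part : ℕ → ℕ → ℕ
  row_antitone : ∀ i j, part (i + 1) j ≤ part i j
  col_antitone : ∀ i j, part i (j + 1) ≤ part i j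
  support_finite : (Function.support fun ij : ℕ × ℕ => part ij.1 ij.2).Finite

/-- `|π|`: the total number of cubes of the plane partition. -/
noncomputable def PlanePartition.size (π : PlanePartition) : ℕ :=
  ∑ᶠ ij : ℕ × ℕ, π.part ij.1 ij.2

/-- `|π(0)|`: the size of the main diagonal partition of a plane partition. -/
noncomputable def PlanePartition.diagSize (π : PlanePartition) : ℕ :=
  ∑ᶠ i : ℕ, π.part i i

open scoped ENNReal

/-- Interlacing. -/
def Il (κ ν : ℕ →₀ ℕ) : Prop := ∀ i, κ i ≤ ν i ∧ ν (i+1) ≤ κ i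

theorem deg_eq (p : ℕ →₀ ℕ) (M : ℕ) (h : ∀ i, M ≤ i → p i = 0) :
    p.degree = ∑ i ∈ Finset.range M, p i := by
  rw [Finsupp.degree_apply]
  refine Finset.sum_subset (fun i hi => ?_) (fun i _ hi => by simpa using hi)
  by_contra hc
  simp at hc hi
  exact hi (h i hc)

theorem exists_bd (p : ℕ →₀ ℕ) : ∃ M, ∀ i, M ≤ i → p i = 0 := by
  refine ⟨p.support.sup id + 1, fun i hi => ?_⟩
  by_contra hc
  have := Finset.le_sup (f := id) (Finsupp.mem_support_iff.2 hc)
  simp at this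
  omega

theorem Il.deg_le {κ ν : ℕ →₀ ℕ} (h : Il κ ν) : κ.degree ≤ ν.degree := by
  obtain ⟨M, hM⟩ := exists_bd ν
  rw [deg_eq ν M hM, deg_eq κ M (fun i hi => by have := (h i).1; rw [hM i hi] at this; omega)]
  exact Finset.sum_le_sum fun i _ => (h i).1

/-- finitely supported function from a bound -/
noncomputable def mk (f : ℕ → ℕ) (h : ∃ M, ∀ i, M ≤ i → f i = 0) : ℕ →₀ ℕ :=
  Finsupp.ofSupportFinite f (by
    obtain ⟨M, hM⟩ := h
    refine (Set.finite_lt_nat M).subset fun i hi => ?_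
    by_contra hc
    exact hi (hM i (by simpa using hc)))

@[simp] theorem mk_apply (f : ℕ → ℕ) (h i) : mk f h i = f i := rfl

theorem bd2 (l m : ℕ →₀ ℕ) : ∃ M, ∀ i, M ≤ i → l i = 0 ∧ m i = 0 := by
  obtain ⟨A, hA⟩ := exists_bd l
  obtain ⟨B, hB⟩ := exists_bd m
  exact ⟨A + B, fun i hi => ⟨hA i (by omega), hB i (by omega)⟩⟩

/-- up function of the local rule -/
def upF (l m k : ℕ →₀ ℕ) (t : ℕ) : ℕ → ℕ
  | 0 => max (l 0) (m 0) + t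
  | i + 1 => min (l i) (m i) + max (l (i+1)) (m (i+1)) - k i

/-- down function of the local rule -/
def dnF (l m n : ℕ →₀ ℕ) (i : ℕ) : ℕ :=
  min (l i) (m i) + max (l (i+1)) (m (i+1)) - n (i+1)

/-- The local rule. -/
noncomputable def localRule (l m : ℕ →₀ ℕ) :
    {n : ℕ →₀ ℕ // Il m n ∧ Il l n} ≃ {k : ℕ →₀ ℕ // Il k m ∧ Il k l} × ℕ where
  toFun n := (⟨mk (dnF l m n.1) (by
      obtain ⟨M, hM⟩ := bd2 l m
      refine ⟨M, fun i hi => ?_⟩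
      have h1 := hM i hi
      have h2 := hM (i+1) (by omega)
      simp [dnF, h1, h2]), by
    obtain ⟨n, h1, h2⟩ := n
    constructor
    all_goals
      intro i
      have a := h1 i
      have b := h2 i
      have c := h1 (i+1)
      have d := h2 (i+1)
      simp only [mk_apply, dnF]
      omega⟩, n.1 0 - max (l 0) (m 0))
  invFun k := ⟨mk (upF l m k.1.1 k.2) (by
      obtain ⟨M, hM⟩ := bd2 l m
      refine ⟨M+1, fun i hi => ?_⟩
      obtain ⟨i, rfl⟩ : ∃ j, i = j + 1 := ⟨i-1, by omega⟩
      have h1 := hM i (by omega)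
      have h2 := hM (i+1) (by omega)
      simp [upF, h1, h2]), by
    obtain ⟨⟨k, h1, h2⟩, t⟩ := k
    constructor
    all_goals
      intro i
      have a := h1 i
      have b := h2 i
      rcases i with _ | i
      · simp only [mk_apply, upF]
        omega
      · have c := h1 i
        have d := h2 i
        simp only [mk_apply, upF]
        omega⟩
  left_inv := by
    rintro ⟨n, h1, h2⟩
    ext i
    rcases i with _ | i
    · have a := h1 0
      have b := h2 0
      simp only [mk_apply, upF]
      omega
    · have a := h1 i
      have b := h2 i
      have c := h1 (i+1)
      have d := h2 (i+1)
      simp only [mk_apply, upF, dnF]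
      omega
  right_inv := by
    rintro ⟨⟨k, h1, h2⟩, t⟩
    ext i
    · have a := h1 i
      have b := h2 i
      simp only [mk_apply, upF, dnF]
      omega
    · simp [upF]

theorem localRule_deg (l m n) :
    n.1.degree + (localRule l m n).1.1.degree = l.degree + m.degree + (localRule l m n).2 := by
  obtain ⟨n, h1, h2⟩ := n
  obtain ⟨M, hM⟩ := bd2 l m
  have hk : ∀ i, n (i+1) + (localRule l m ⟨n, h1, h2⟩).1.1 i
      = min (l i) (m i) + max (l (i+1)) (m (i+1)) := by
    intro i
    have a := h1 i
    have b := h2 i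
    have c := h1 (i+1)
    have d := h2 (i+1)
    simp only [localRule, Equiv.coe_fn_mk, mk_apply, dnF]
    omega
  have ht : n 0 = max (l 0) (m 0) + (localRule l m ⟨n, h1, h2⟩).2 := by
    have a := h1 0
    have b := h2 0
    simp only [localRule, Equiv.coe_fn_mk]
    omega
  generalize (localRule l m ⟨n, h1, h2⟩).1.1 = k at *
  generalize (localRule l m ⟨n, h1, h2⟩).2 = t at *
  have hz : ∀ i, M ≤ i → n (i+1) = 0 ∧ k i = 0 := by
    intro i hi
    have := hM i hi
    have := hM (i+1) (by omega)
    have := hk i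
    omega
  rw [deg_eq k M (fun i hi => (hz i hi).2), deg_eq l (M+1) (fun i hi => (hM i (by omega)).1),
    deg_eq m (M+1) (fun i hi => (hM i (by omega)).2), deg_eq n (M+1) (fun i hi => by
      obtain ⟨i, rfl⟩ : ∃ j, i = j + 1 := ⟨i-1, by omega⟩
      exact (hz i (by omega)).1)]
  rw [Finset.sum_range_succ' (fun i => n i)]
  have e1 : ∑ i ∈ Finset.range M, n (i+1) + ∑ i ∈ Finset.range M, k i
      = ∑ i ∈ Finset.range M, min (l i) (m i) + ∑ i ∈ Finset.range M, max (l (i+1)) (m (i+1)) := by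
    rw [← Finset.sum_add_distrib, ← Finset.sum_add_distrib]
    exact Finset.sum_congr rfl fun i _ => hk i
  have e2 : ∑ i ∈ Finset.range (M+1), l i + ∑ i ∈ Finset.range (M+1), m i
      = ∑ i ∈ Finset.range (M+1), min (l i) (m i) + ∑ i ∈ Finset.range (M+1), max (l i) (m i) := by
    rw [← Finset.sum_add_distrib, ← Finset.sum_add_distrib]
    exact Finset.sum_congr rfl fun i _ => by omega
  rw [Finset.sum_range_succ (fun i => min (l i) (m i)),
    Finset.sum_range_succ' (fun i => max (l i) (m i))] at e2
  have := hM M le_rfl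
  simp only [this.1, this.2] at e2
  omega

open Classical in
/-- creation operator -/
noncomputable def U (a : ℝ≥0∞) (f : (ℕ →₀ ℕ) → ℝ≥0∞) (n : ℕ →₀ ℕ) : ℝ≥0∞ :=
  ∑' l : ℕ →₀ ℕ, if Il l n then a ^ (n.degree - l.degree) * f l else 0

open Classical in
/-- annihilation operator -/
noncomputable def D (b : ℝ≥0∞) (f : (ℕ →₀ ℕ) → ℝ≥0∞) (l : ℕ →₀ ℕ) : ℝ≥0∞ :=
  ∑' n : ℕ →₀ ℕ, if Il l n then b ^ (n.degree - l.degree) * f n else 0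

theorem tsum_ite_sub {α : Type*} (P : α → Prop) [DecidablePred P] (f : α → ℝ≥0∞) :
    ∑' x, (if P x then f x else 0) = ∑' x : {x // P x}, f x.1 := by
  have := tsum_subtype {x | P x} f
  refine Eq.trans (tsum_congr fun x => ?_) this.symm
  by_cases h : P x <;> simp [h]

open Classical in
theorem skewCauchy (a b : ℝ≥0∞) (l m : ℕ →₀ ℕ) :
    ∑' n : ℕ →₀ ℕ, (if Il m n ∧ Il l n then b ^ (n.degree - m.degree) * a ^ (n.degree - l.degree) else 0)
    = (1 - a * b)⁻¹ * ∑' k : ℕ →₀ ℕ,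
      (if Il k m ∧ Il k l then a ^ (m.degree - k.degree) * b ^ (l.degree - k.degree) else 0) := by
  rw [tsum_ite_sub, tsum_ite_sub, ← ENNReal.tsum_geometric, ← ENNReal.tsum_mul_left]
  simp_rw [← ENNReal.tsum_mul_right]
  rw [← ENNReal.tsum_prod (f := fun (k : {k : ℕ →₀ ℕ // Il k m ∧ Il k l}) (t : ℕ) =>
    (a * b) ^ t * (a ^ (m.degree - k.1.degree) * b ^ (l.degree - k.1.degree))),
    ← (localRule l m).tsum_eq]
  refine tsum_congr fun n => ?_
  have h := localRule_deg l m n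
  have h1 := n.2.1.deg_le
  have h2 := n.2.2.deg_le
  have h3 := (localRule l m n).1.2.1.deg_le
  have h4 := (localRule l m n).1.2.2.deg_le
  rw [show n.1.degree - m.degree = (localRule l m n).2 + (l.degree - (localRule l m n).1.1.degree) by omega,
    show n.1.degree - l.degree = (localRule l m n).2 + (m.degree - (localRule l m n).1.1.degree) by omega]
  ring

theorem D_U (a b : ℝ≥0∞) (f) (m : ℕ →₀ ℕ) :
    D b (U a f) m = (1 - a * b)⁻¹ * U a (D b f) m := by
  classical
  have e1 : D b (U a f) m = ∑' l, f l * ∑' n : ℕ →₀ ℕ, (if Il m n ∧ Il l n then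
      b ^ (n.degree - m.degree) * a ^ (n.degree - l.degree) else 0) := by
    simp_rw [← ENNReal.tsum_mul_left]
    rw [ENNReal.tsum_comm]
    refine tsum_congr fun n => ?_
    by_cases h : Il m n
    · simp only [h, if_true, true_and, U]
      rw [← ENNReal.tsum_mul_left]
      refine tsum_congr fun l => ?_
      split_ifs
      · ring
      · simp
    · simp [h]
  have e2 : U a (D b f) m = ∑' l, f l * ∑' k : ℕ →₀ ℕ,
      (if Il k m ∧ Il k l then a ^ (m.degree - k.degree) * b ^ (l.degree - k.degree) else 0) := by
    simp_rw [← ENNReal.tsum_mul_left]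
    rw [ENNReal.tsum_comm]
    refine tsum_congr fun n => ?_
    by_cases h : Il n m
    · simp only [h, if_true, true_and, D]
      rw [← ENNReal.tsum_mul_left]
      refine tsum_congr fun l => ?_
      split_ifs
      · ring
      · simp
    · simp [h]
  rw [e1, e2, ← ENNReal.tsum_mul_left]
  refine tsum_congr fun l => ?_
  rw [skewCauchy]
  ring

open Classical in
/-- Schur function values. -/
noncomputable def S : List ℝ≥0∞ → (ℕ →₀ ℕ) → ℝ≥0∞
  | [] => fun n => if n = 0 then 1 else 0
  | a :: as => U a (S as)

theorem Il_zero {l : ℕ →₀ ℕ} : Il l 0 ↔ l = 0 := by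
  constructor
  · intro h
    ext i
    simpa using (h i).1
  · rintro rfl i
    simp

theorem S_zero (as : List ℝ≥0∞) : S as 0 = 1 := by
  classical
  induction as with
  | nil => simp [S]
  | cons a as ih =>
    simp only [S, U, Il_zero]
    rw [tsum_eq_single 0 (by intro b hb; simp [hb])]
    simp [ih]

theorem U_smul (a c : ℝ≥0∞) (f) : U a (fun n => c * f n) = fun n => c * U a f n := by
  funext n
  simp only [U]
  rw [← ENNReal.tsum_mul_left]
  refine tsum_congr fun l => ?_
  split_ifs
  · ring
  · simp

theorem D_S (b : ℝ≥0∞) (as : List ℝ≥0∞) (n) :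
    D b (S as) n = (as.map fun a => (1 - a * b)⁻¹).prod * S as n := by
  classical
  induction as generalizing n with
  | nil =>
    simp only [D, S, List.map_nil, List.prod_nil, one_mul]
    rw [tsum_eq_single 0 (by intro b hb; simp [hb])]
    simp only [Il_zero]
    split_ifs with h <;> simp
  | cons a as ih =>
    have : D b (S as) = fun n => (as.map fun a => (1 - a * b)⁻¹).prod * S as n := funext ih
    rw [S, D_U, this, U_smul, List.map_cons, List.prod_cons, mul_assoc]

theorem cauchy (as bs : List ℝ≥0∞) : ∑' n, S as n * S bs n =
    (bs.map fun b => (as.map fun a => (1 - a * b)⁻¹).prod).prod := by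
  classical
  induction bs with
  | nil =>
    rw [tsum_eq_single 0 (by intro b hb; simp [S, hb])]
    simp [S_zero]
  | cons b bs ih =>
    rw [List.map_cons, List.prod_cons, ← ih, ← ENNReal.tsum_mul_left]
    simp_rw [← mul_assoc, ← D_S]
    simp only [S, U, D]
    simp_rw [← ENNReal.tsum_mul_left, ← ENNReal.tsum_mul_right]
    rw [ENNReal.tsum_comm]
    refine tsum_congr fun n => tsum_congr fun l => ?_
    split_ifs
    · ring
    · simp

theorem S_map (c : ℝ≥0∞) (as : List ℝ≥0∞) (n) :
    S (as.map (c * ·)) n = c ^ n.degree * S as n := by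
  induction as generalizing n with
  | nil =>
    simp only [S, List.map_nil]
    split_ifs with h <;> simp [h]
  | cons a as ih =>
    simp only [List.map_cons, S, U]
    rw [← ENNReal.tsum_mul_left]
    refine tsum_congr fun l => ?_
    split_ifs with h
    · rw [ih, mul_pow, show n.degree = (n.degree - l.degree) + l.degree from
        (Nat.sub_add_cancel h.deg_le).symm, pow_add]
      simp
      ring
    · simp

/-- Half of a plane partition with given main diagonal. -/
abbrev Half (l : ℕ →₀ ℕ) : Type :=
  {p : ℕ → ℕ →₀ ℕ // p 0 = l ∧ (∀ k, Il (p (k+1)) (p k)) ∧ ∃ N, ∀ k, N ≤ k → p k = 0}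

/-- Size off the main diagonal. -/
noncomputable def tailSize (p : ℕ → ℕ →₀ ℕ) : ℕ := ∑ᶠ k, (p (k+1)).degree

theorem cast_finsum {α : Type*} (f : α → ℕ) (hf : (Function.support f).Finite) :
    ((∑ᶠ x, f x : ℕ) : ℝ≥0∞) = ∑' x, (f x : ℝ≥0∞) := by
  rw [finsum_eq_sum f hf, tsum_eq_sum (s := hf.toFinset)]
  · push_cast; rfl
  · intro b hb
    simpa using hb

theorem cast_tailSize (p : ℕ → ℕ →₀ ℕ) (h : ∃ N, ∀ k, N ≤ k → p k = 0) :
    (tailSize p : ℝ≥0∞) = ∑' k, ((p (k+1)).degree : ℝ≥0∞) := by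
  refine cast_finsum _ ?_
  obtain ⟨N, hN⟩ := h
  refine (Set.finite_lt_nat N).subset fun k hk => ?_
  by_contra hc
  refine hk ?_
  have := hN (k+1) (by simp at hc; omega)
  simp [this]

theorem cast_degree (p : ℕ →₀ ℕ) : (p.degree : ℝ≥0∞) = ∑' i, (p i : ℝ≥0∞) := by
  rw [tsum_eq_sum (s := p.support)]
  · rw [Finsupp.degree_apply]; push_cast; rfl
  · intro b hb
    simpa using hb

theorem tailSize_cons (p : ℕ → ℕ →₀ ℕ) (h : ∃ N, ∀ k, N ≤ k → p k = 0) :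
    tailSize p = (p 1).degree + tailSize fun k => p (k+1) := by
  have h' : ∃ N, ∀ k, N ≤ k → p (k+1) = 0 := by
    obtain ⟨N, hN⟩ := h
    exact ⟨N, fun k hk => hN _ (by omega)⟩
  have : (tailSize p : ℝ≥0∞) = ((p 1).degree + tailSize fun k => p (k+1) : ℕ) := by
    rw [cast_tailSize p h]
    push_cast
    rw [cast_tailSize _ h', tsum_eq_zero_add' ENNReal.summable]
  exact_mod_cast this

/-- Splitting off the first step. -/
def consHalf (l : ℕ →₀ ℕ) : Half l ≃ Σ m : {m : ℕ →₀ ℕ // Il m l}, Half m.1 where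
  toFun p := ⟨⟨p.1 1, by have := p.2.2.1 0; rwa [p.2.1] at this⟩,
    ⟨fun k => p.1 (k+1), rfl, fun k => p.2.2.1 (k+1), by
      obtain ⟨N, hN⟩ := p.2.2.2
      exact ⟨N, fun k hk => hN _ (by omega)⟩⟩⟩
  invFun y := ⟨fun k => Nat.casesOn k l (fun k => y.2.1 k), rfl, by
      intro k
      rcases k with _ | k
      · show Il (y.2.1 0) l
        rw [y.2.2.1]; exact y.1.2
      · exact y.2.2.2.1 k, by
      obtain ⟨N, hN⟩ := y.2.2.2.2
      refine ⟨N+1, fun k hk => ?_⟩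
      obtain ⟨k, rfl⟩ : ∃ j, k = j + 1 := ⟨k-1, by omega⟩
      exact hN k (by omega)⟩
  left_inv := by
    rintro ⟨p, rfl, h⟩
    refine Subtype.ext ?_
    funext k
    rcases k with _ | k <;> rfl
  right_inv := by
    rintro ⟨⟨m, hm⟩, ⟨p, h0, h⟩⟩
    dsimp only at h0
    subst h0
    rfl

open Classical in
/-- truncated generating function -/
noncomputable def GN (q : ℝ≥0∞) (N : ℕ) (l : ℕ →₀ ℕ) : ℝ≥0∞ :=
  ∑' p : Half l, if ∀ k, N ≤ k → p.1 k = 0 then q ^ tailSize p.1 else 0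

theorem GN_eq (q : ℝ≥0∞) (N : ℕ) (l : ℕ →₀ ℕ) :
    GN q N l = S ((List.range N).map (q ^ ·)) l := by
  classical
  induction N generalizing l with
  | zero =>
    simp only [List.range_zero, List.map_nil, S, GN]
    split_ifs with h
    · subst h
      rw [tsum_eq_single (⟨fun _ => 0, rfl, fun k => Il_zero.2 rfl, 0, fun _ _ => rfl⟩ : Half 0)]
      · simp [tailSize]
      · intro p hp
        rw [if_neg]
        intro hc
        exact hp (Subtype.ext (funext fun k => hc k (by omega)))
    · simp only [ENNReal.tsum_eq_zero]
      intro p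
      rw [if_neg]
      intro hc
      exact h (p.2.1.symm.trans (hc 0 (by omega)))
  | succ N ih =>
    rw [List.range_succ_eq_map, List.map_cons, List.map_map, S]
    have e : (List.range N).map ((q ^ ·) ∘ Nat.succ) = ((List.range N).map (q ^ ·)).map (q * ·) := by
      rw [List.map_map]
      refine List.map_congr_left fun i _ => ?_
      simp [pow_succ']
    rw [e, U]
    simp_rw [S_map, ← ih]
    rw [tsum_ite_sub, GN, ← (consHalf l).symm.tsum_eq, ENNReal.tsum_sigma']
    refine tsum_congr fun m => ?_
    rw [GN, ← ENNReal.tsum_mul_left, ← ENNReal.tsum_mul_left]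
    refine tsum_congr fun p => ?_
    have h1 : (∀ k, N + 1 ≤ k → ((consHalf l).symm ⟨m, p⟩).1 k = 0) ↔ ∀ k, N ≤ k → p.1 k = 0 := by
      constructor
      · intro h k hk
        exact h (k+1) (by omega)
      · intro h k hk
        obtain ⟨k, rfl⟩ : ∃ j, k = j + 1 := ⟨k-1, by omega⟩
        exact h k (by omega)
    have h2 : tailSize ((consHalf l).symm ⟨m, p⟩).1 = m.1.degree + tailSize p.1 := by
      rw [tailSize_cons _ ((consHalf l).symm ⟨m, p⟩).2.2.2]
      congr 2
      exact p.2.1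
    rw [h2]
    simp only [h1]
    split_ifs
    · simp [pow_add]
    · simp

theorem tsum_iSup_mono {α : Type*} (f : ℕ → α → ℝ≥0∞) (hf : Monotone f) :
    ∑' a, ⨆ n, f n a = ⨆ n, ∑' a, f n a := by
  let _ : MeasurableSpace α := ⊤
  have _ : MeasurableSingletonClass α := ⟨fun _ => trivial⟩
  have := MeasureTheory.lintegral_iSup (μ := MeasureTheory.Measure.count) (f := f)
    (fun n => measurable_from_top) hf
  simpa only [MeasureTheory.lintegral_count] using this

theorem GN_mono (q : ℝ≥0∞) : Monotone (GN q) := by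
  classical
  intro N M h l
  refine ENNReal.tsum_le_tsum fun p => ?_
  split_ifs with h1 h2
  · exact le_rfl
  · exact absurd (fun k hk => h1 k (h.trans hk)) h2
  · exact zero_le
  · exact le_rfl

theorem iSup_GN (q : ℝ≥0∞) (l) : ∑' p : Half l, q ^ tailSize p.1 = ⨆ N, GN q N l := by
  classical
  unfold GN
  rw [← tsum_iSup_mono]
  · refine tsum_congr fun p => ?_
    refine le_antisymm ?_ (iSup_le fun N => ?_)
    · obtain ⟨N, hN⟩ := p.2.2.2
      refine le_iSup_of_le N ?_
      rw [if_pos hN]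
    · split_ifs <;> simp
  · intro N M h p
    dsimp only
    split_ifs with h1 h2
    · exact le_rfl
    · exact absurd (fun k hk => h1 k (h.trans hk)) h2
    · exact zero_le
    · exact le_rfl

theorem half_sum (q x : ℝ≥0∞) :
    ∑' l : ℕ →₀ ℕ, x ^ l.degree * ((∑' p : Half l, q ^ tailSize p.1) * (∑' p : Half l, q ^ tailSize p.1))
    = ⨆ N : ℕ, ∏ ij ∈ Finset.range N ×ˢ Finset.range N, (1 - x * q ^ (ij.1 + ij.2))⁻¹ := by
  have key : ∀ N, ∑' l : ℕ →₀ ℕ, x ^ l.degree * (GN q N l * GN q N l)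
      = ∏ ij ∈ Finset.range N ×ˢ Finset.range N, (1 - x * q ^ (ij.1 + ij.2))⁻¹ := by
    intro N
    simp_rw [GN_eq, ← mul_assoc, ← S_map]
    rw [cauchy, Finset.prod_product_right]
    have hl : ∀ f : ℕ → ℝ≥0∞, ((List.range N).map f).prod = ∏ i ∈ Finset.range N, f i :=
      fun f => rfl
    simp only [List.map_map, hl, Function.comp_def]
    refine Finset.prod_congr rfl fun j _ => Finset.prod_congr rfl fun i _ => ?_
    rw [pow_add, mul_assoc]
  simp_rw [← key]
  rw [← tsum_iSup_mono]
  · refine tsum_congr fun l => ?_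
    rw [iSup_GN, ← ENNReal.mul_iSup]
    congr 1
    refine le_antisymm ?_ (iSup_le fun N =>
      mul_le_mul' (le_iSup (fun N => GN q N l) N) (le_iSup (fun N => GN q N l) N))
    rw [ENNReal.iSup_mul]
    refine iSup_le fun N => ?_
    rw [ENNReal.mul_iSup]
    refine iSup_le fun K => le_iSup_of_le (max N K) ?_
    exact mul_le_mul' (GN_mono q (le_max_left N K) l) (GN_mono q (le_max_right N K) l)
  · intro N M h l
    have := GN_mono q h l
    dsimp only
    gcongr

theorem PlanePartition.exists_bd (π : PlanePartition) :
    ∃ M, ∀ i j, M ≤ i ∨ M ≤ j → π.part i j = 0 := by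
  obtain ⟨⟨A, B⟩, hAB⟩ := π.support_finite.bddAbove
  refine ⟨A + B + 1, fun i j h => ?_⟩
  by_contra hc
  have : (i, j) ≤ (A, B) := hAB hc
  rw [Prod.mk_le_mk] at this
  omega

theorem half_sigma_ext {X Y : Σ l : ℕ →₀ ℕ, Half l × Half l} (h1 : X.2.1.1 = Y.2.1.1)
    (h2 : X.2.2.1 = Y.2.2.1) : X = Y := by
  obtain ⟨l, ⟨p, rfl, hp⟩, ⟨p', h0, hp'⟩⟩ := X
  obtain ⟨m, ⟨r, rfl, hr⟩, ⟨r', k0, hr'⟩⟩ := Y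
  dsimp only at h1 h2
  subst h1 h2
  rfl

theorem Half.bd {l : ℕ →₀ ℕ} (p : Half l) : ∃ M, ∀ k i, M ≤ k ∨ M ≤ i → p.1 k i = 0 := by
  obtain ⟨N, hN⟩ := p.2.2.2
  obtain ⟨A, hA⟩ := _root_.exists_bd (p.1 0)
  refine ⟨N + A, fun k i h => ?_⟩
  rcases h with h | h
  · rw [hN k (by omega)]; rfl
  · induction k with
    | zero => exact hA i (by omega)
    | succ k ih =>
      have := (p.2.2.1 k i).1
      omega

/-- upper half of a plane partition -/
noncomputable def upperHalf (π : PlanePartition) (k : ℕ) : ℕ →₀ ℕ :=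
  mk (fun i => π.part i (i+k)) (by
    obtain ⟨M, hM⟩ := π.exists_bd
    exact ⟨M, fun i hi => hM _ _ (Or.inl hi)⟩)

/-- lower half of a plane partition -/
noncomputable def lowerHalf (π : PlanePartition) (k : ℕ) : ℕ →₀ ℕ :=
  mk (fun i => π.part (i+k) i) (by
    obtain ⟨M, hM⟩ := π.exists_bd
    exact ⟨M, fun i hi => hM _ _ (Or.inr hi)⟩)

theorem upper_mem (π : PlanePartition) : (∀ k, Il (upperHalf π (k+1)) (upperHalf π k)) ∧
    ∃ N, ∀ k, N ≤ k → upperHalf π k = 0 := by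
  constructor
  · intro k i
    refine ⟨π.col_antitone i (i+k), ?_⟩
    have := π.row_antitone i (i+1+k)
    simp only [upperHalf, mk_apply]
    rwa [show i + (k+1) = i + 1 + k by omega]
  · obtain ⟨M, hM⟩ := π.exists_bd
    refine ⟨M, fun k hk => ?_⟩
    ext i
    exact hM _ _ (Or.inr (by omega))

theorem lower_mem (π : PlanePartition) : (∀ k, Il (lowerHalf π (k+1)) (lowerHalf π k)) ∧
    ∃ N, ∀ k, N ≤ k → lowerHalf π k = 0 := by
  constructor
  · intro k i
    refine ⟨π.row_antitone (i+k) i, ?_⟩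
    have := π.col_antitone (i+1+k) i
    simp only [lowerHalf, mk_apply]
    rwa [show i + (k+1) = i + 1 + k by omega]
  · obtain ⟨M, hM⟩ := π.exists_bd
    refine ⟨M, fun k hk => ?_⟩
    ext i
    exact hM _ _ (Or.inl (by omega))

/-- gluing two halves -/
def glueF (p p' : ℕ → ℕ →₀ ℕ) (i j : ℕ) : ℕ := if i ≤ j then p (j - i) i else p' (i - j) j

theorem glueF_up (p p' : ℕ → ℕ →₀ ℕ) (i k : ℕ) : glueF p p' i (i+k) = p k i := by
  simp [glueF]

theorem glueF_low (p p' : ℕ → ℕ →₀ ℕ) (h : p 0 = p' 0) (i k : ℕ) :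
    glueF p p' (i+k) i = p' k i := by
  rcases k with _ | k
  · simp [glueF, h]
  · have : ¬ (i + (k+1) ≤ i) := by omega
    simp [glueF]

/-- Plane partitions as pairs of halves. -/
noncomputable def ppEquiv : PlanePartition ≃ Σ l : ℕ →₀ ℕ, Half l × Half l where
  toFun π := ⟨upperHalf π 0, ⟨upperHalf π, rfl, upper_mem π⟩, ⟨lowerHalf π, rfl, lower_mem π⟩⟩
  invFun X :=
    { part := glueF X.2.1.1 X.2.2.1
      row_antitone := by
        obtain ⟨l, p, p'⟩ := X
        have h0 : p.1 0 = p'.1 0 := p.2.1.trans p'.2.1.symm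
        intro i j
        dsimp only
        rcases Nat.lt_or_ge i j with h | h
        · obtain ⟨k, rfl⟩ : ∃ k, j = i + 1 + k := ⟨j - (i+1), by omega⟩
          rw [glueF_up, show i + 1 + k = i + (k+1) by omega, glueF_up]
          exact (p.2.2.1 k i).2
        · obtain ⟨k, rfl⟩ : ∃ k, i = j + k := ⟨i - j, by omega⟩
          rw [glueF_low _ _ h0, show j + k + 1 = j + (k+1) by omega, glueF_low _ _ h0]
          exact (p'.2.2.1 k j).1
      col_antitone := by
        obtain ⟨l, p, p'⟩ := X
        have h0 : p.1 0 = p'.1 0 := p.2.1.trans p'.2.1.symm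
        intro i j
        dsimp only
        rcases Nat.lt_or_ge j i with h | h
        · obtain ⟨k, rfl⟩ : ∃ k, i = j + 1 + k := ⟨i - (j+1), by omega⟩
          rw [glueF_low _ _ h0, show j + 1 + k = j + (k+1) by omega, glueF_low _ _ h0]
          exact (p'.2.2.1 k j).2
        · obtain ⟨k, rfl⟩ : ∃ k, j = i + k := ⟨j - i, by omega⟩
          rw [glueF_up, show i + k + 1 = i + (k+1) by omega, glueF_up]
          exact (p.2.2.1 k i).1
      support_finite := by
        obtain ⟨A, hA⟩ := X.2.1.bd
        obtain ⟨B, hB⟩ := X.2.2.bd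
        refine ((Set.finite_lt_nat (A + A + B + B)).prod
          (Set.finite_lt_nat (A + A + B + B))).subset ?_
        rintro ⟨i, j⟩ h
        by_contra hc
        refine h ?_
        have hc : ¬ (i < A + A + B + B ∧ j < A + A + B + B) := hc
        simp only [glueF]
        split_ifs
        · exact hA _ _ (by omega)
        · exact hB _ _ (by omega) }
  left_inv := by
    intro π
    have : glueF (upperHalf π) (lowerHalf π) = π.part := by
      funext i j
      simp only [glueF]
      split_ifs with h
      · show π.part i (i + (j - i)) = _
        rw [Nat.add_sub_cancel' h]
      · show π.part (j + (i - j)) j = _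
        rw [Nat.add_sub_cancel' (by omega)]
    obtain ⟨part, h1, h2, h3⟩ := π
    simp only [PlanePartition.mk.injEq]
    exact this
  right_inv := by
    intro X
    have h0 : X.2.1.1 0 = X.2.2.1 0 := X.2.1.2.1.trans X.2.2.2.1.symm
    refine half_sigma_ext ?_ ?_
    · funext k
      ext i
      exact glueF_up _ _ _ _
    · funext k
      ext i
      exact glueF_low _ _ h0 _ _

/-- Splitting the quadrant -/
def splitF : (ℕ ⊕ ℕ × ℕ) ⊕ ℕ × ℕ → ℕ × ℕ
  | .inl (.inl i) => (i, i)
  | .inl (.inr (k, i)) => (i, i + (k+1))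
  | .inr (k, i) => (i + (k+1), i)

theorem splitF_bij : Function.Bijective splitF := by
  constructor
  · rintro ((i | ⟨k, i⟩) | ⟨k, i⟩) ((j | ⟨l, j⟩) | ⟨l, j⟩) h <;>
      simp only [splitF, Prod.mk.injEq] at h <;> 
      first
        | (exfalso; omega)
        | (obtain ⟨rfl, h⟩ := h; obtain rfl : k = l := by omega
           rfl)
        | (obtain ⟨h, rfl⟩ := h; obtain rfl : k = l := by omega
           rfl)
        | (obtain ⟨rfl, h⟩ := h
           rfl)
  · rintro ⟨i, j⟩
    rcases Nat.lt_trichotomy i j with h | h | h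
    · exact ⟨.inl (.inr (j - i - 1, i)), by
        show (i, i + (j - i - 1 + 1)) = (i, j)
        rw [show i + (j - i - 1 + 1) = j by omega]⟩
    · exact ⟨.inl (.inl i), by subst h; rfl⟩
    · exact ⟨.inr (i - j - 1, j), by
        show (j + (i - j - 1 + 1), j) = (i, j)
        rw [show j + (i - j - 1 + 1) = i by omega]⟩

theorem diagSize_eq (π : PlanePartition) : π.diagSize = (upperHalf π 0).degree := by
  have : (π.diagSize : ℝ≥0∞) = ((upperHalf π 0).degree : ℕ) := by
    rw [cast_degree, PlanePartition.diagSize, cast_finsum]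
    · rfl
    · exact (upperHalf π 0).finite_support
  exact_mod_cast this

theorem size_eq (π : PlanePartition) : π.size =
    (upperHalf π 0).degree + tailSize (upperHalf π) + tailSize (lowerHalf π) := by
  have : (π.size : ℝ≥0∞) = ((upperHalf π 0).degree + tailSize (upperHalf π)
      + tailSize (lowerHalf π) : ℕ) := by
    push_cast
    rw [PlanePartition.size, cast_finsum _ π.support_finite, cast_degree,
      cast_tailSize _ (upper_mem π).2, cast_tailSize _ (lower_mem π).2]
    simp_rw [cast_degree]
    rw [← (Equiv.ofBijective splitF splitF_bij).tsum_eq,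
      Summable.tsum_sum ENNReal.summable ENNReal.summable,
      Summable.tsum_sum ENNReal.summable ENNReal.summable, ENNReal.tsum_prod', ENNReal.tsum_prod']
    rfl
  exact_mod_cast this

theorem pp_sum (q Q : ℝ≥0∞) : ∑' π : PlanePartition, q ^ π.size * Q ^ π.diagSize
    = ⨆ N : ℕ, ∏ ij ∈ Finset.range N ×ˢ Finset.range N, (1 - (q * Q) * q ^ (ij.1 + ij.2))⁻¹ := by
  rw [← half_sum]
  have : ∀ π : PlanePartition, q ^ π.size * Q ^ π.diagSize =
      (fun X : Σ l : ℕ →₀ ℕ, Half l × Half l => (q * Q) ^ X.1.degree *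
        (q ^ tailSize X.2.1.1 * q ^ tailSize X.2.2.1)) (ppEquiv π) := by
    intro π
    rw [size_eq, diagSize_eq]
    show _ = (q * Q) ^ (upperHalf π 0).degree *
      (q ^ tailSize (upperHalf π) * q ^ tailSize (lowerHalf π))
    rw [mul_pow, pow_add, pow_add]
    ring
  refine (tsum_congr this).trans ((ppEquiv.tsum_eq
    (fun X : Σ l : ℕ →₀ ℕ, Half l × Half l => (q * Q) ^ X.1.degree *
        (q ^ tailSize X.2.1.1 * q ^ tailSize X.2.2.1))).trans ?_)
  rw [ENNReal.tsum_sigma']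
  refine tsum_congr fun l => ?_
  dsimp only
  rw [ENNReal.tsum_mul_left, ENNReal.tsum_prod']
  simp_rw [ENNReal.tsum_mul_left, ENNReal.tsum_mul_right]

theorem prod_side (q Q : ℝ) (hq : q ∈ Set.Ioo (0 : ℝ) 1) (hQ : Q ∈ Set.Ioo (0 : ℝ) 1) :
    Filter.Tendsto (fun N : ℕ => ∏ ij ∈ Finset.range N ×ˢ Finset.range N,
      (1 - (q * Q) * q ^ (ij.1 + ij.2))⁻¹) Filter.atTop
      (nhds (∏' n : ℕ, ((1 - Q * q ^ (n + 1))⁻¹) ^ (n + 1))) := by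
  obtain ⟨hq0, hq1⟩ := hq
  obtain ⟨hQ0, hQ1⟩ := hQ
  set f : ℕ × ℕ → ℝ := fun ij => (1 - (q * Q) * q ^ (ij.1 + ij.2))⁻¹ with hf
  have hx : ∀ n : ℕ, q * Q * q ^ n ≤ Q := fun n => by
    have : q ^ n ≤ 1 := pow_le_one₀ hq0.le hq1.le
    have : q * q ^ n ≤ 1 := by nlinarith [pow_pos hq0 n]
    nlinarith
  have hm : Multipliable f := by
    have h1 : Summable fun ij : ℕ × ℕ => f ij - 1 := by
      have h2 : Summable fun ij : ℕ × ℕ => (1 - Q)⁻¹ * (q ^ ij.1 * q ^ ij.2) :=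
        (Summable.mul_of_nonneg (summable_geometric_of_lt_one hq0.le hq1)
          (summable_geometric_of_lt_one hq0.le hq1) (fun n => by positivity)
          (fun n => by positivity)).mul_left _
      have e : ∀ ij : ℕ × ℕ, f ij - 1 = (1 - q * Q * q ^ (ij.1 + ij.2))⁻¹ *
          (q * Q * q ^ (ij.1 + ij.2)) := by
        intro ij
        have := hx (ij.1 + ij.2)
        have : 1 - q * Q * q ^ (ij.1 + ij.2) ≠ 0 := by linarith
        simp only [hf]
        field_simp
        ring
      refine Summable.of_nonneg_of_le (fun ij => ?_) (fun ij => ?_) h2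
      · rw [e]
        have := hx (ij.1 + ij.2)
        have : 0 < 1 - q * Q * q ^ (ij.1 + ij.2) := by linarith
        positivity
      · rw [e, ← pow_add]
        have h3 := hx (ij.1 + ij.2)
        have h4 : 0 < 1 - Q := by linarith
        have h5 : q * Q * q ^ (ij.1 + ij.2) ≤ q ^ (ij.1 + ij.2) := by
          have := pow_pos hq0 (ij.1 + ij.2)
          have : q * Q ≤ 1 := by nlinarith
          nlinarith
        have h6 : (1 - q * Q * q ^ (ij.1 + ij.2))⁻¹ ≤ (1 - Q)⁻¹ :=
          inv_anti₀ h4 (by linarith)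
        exact mul_le_mul h6 h5 (by positivity) (by positivity)
    simpa using Real.multipliable_one_add_of_summable h1
  have hp := hm.hasProd
  have ht : ∏' n : ℕ, ((1 - Q * q ^ (n + 1))⁻¹) ^ (n + 1) = ∏' ij, f ij := by
    have h1 := (Finset.HasAntidiagonal.sigmaAntidiagonalEquivProd (A := ℕ)).hasProd_iff.2 hp
    refine HasProd.tprod_eq (h1.sigma fun n => ?_)
    have h2 := hasProd_fintype fun c : Finset.HasAntidiagonal.antidiagonal n =>
      (f ∘ Finset.HasAntidiagonal.sigmaAntidiagonalEquivProd) ⟨n, c⟩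
    convert h2 using 1
    rw [Finset.prod_congr rfl (g := fun _ => (1 - Q * q ^ (n+1))⁻¹)]
    · simp
    · rintro ⟨⟨i, j⟩, h⟩ _
      rw [Finset.HasAntidiagonal.mem_antidiagonal] at h
      dsimp only at h
      subst h
      simp only [hf, Function.comp, Finset.HasAntidiagonal.sigmaAntidiagonalEquivProd_apply]
      rw [show q * Q * q ^ (i + j) = Q * q ^ (i + j + 1) by ring]
  rw [ht]
  have hp' : Filter.Tendsto (fun s : Finset (ℕ × ℕ) => ∏ ij ∈ s, f ij) Filter.atTop
      (nhds (∏' ij, f ij)) := hp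
  refine hp'.comp ?_
  refine Filter.tendsto_atTop_finset_of_monotone ?_ ?_
  · intro a b h
    exact Finset.product_subset_product (Finset.range_mono h) (Finset.range_mono h)
  · rintro ⟨i, j⟩
    exact ⟨i + j + 1, by
      simp only [Finset.mem_product, Finset.mem_range]
      omega⟩

/-- The generating function of plane partitions weighted by total size and by the size
of the main diagonal partition equals `∏_{n ≥ 1} (1 - Q qⁿ)⁻ⁿ`. -/
theorem planePartition_diag_generating_function (q Q : ℝ)
    (hq : q ∈ Set.Ioo (0 : ℝ) 1) (hQ : Q ∈ Set.Ioo (0 : ℝ) 1) :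
    ∑' π : PlanePartition, q ^ π.size * Q ^ π.diagSize
      = ∏' n : ℕ, ((1 - Q * q ^ (n + 1))⁻¹) ^ (n + 1) := by
  have hlim := prod_side q Q hq hQ
  have hq0 := hq.1
  have hQ0 := hQ.1
  set T := ∏' n : ℕ, ((1 - Q * q ^ (n + 1))⁻¹) ^ (n + 1) with hT
  have hpos : ∀ n : ℕ, 0 < 1 - q * Q * q ^ n := by
    intro n
    have : q ^ n ≤ 1 := pow_le_one₀ hq0.le hq.2.le
    have h2 : q * Q < 1 := by nlinarith [hq.2, hQ.2]
    have := mul_pos hq0 hQ0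
    nlinarith [pow_pos hq0 n]
  have hZ : ∑' π : PlanePartition, ENNReal.ofReal q ^ π.size * ENNReal.ofReal Q ^ π.diagSize
      = ENNReal.ofReal T := by
    rw [pp_sum]
    have e : ∀ N : ℕ, ∏ ij ∈ Finset.range N ×ˢ Finset.range N,
        (1 - (ENNReal.ofReal q * ENNReal.ofReal Q) * ENNReal.ofReal q ^ (ij.1 + ij.2))⁻¹
        = ENNReal.ofReal (∏ ij ∈ Finset.range N ×ˢ Finset.range N,
      (1 - (q * Q) * q ^ (ij.1 + ij.2))⁻¹) := by
      intro N
      rw [ENNReal.ofReal_prod_of_nonneg (fun ij _ => (inv_pos.2 (hpos _)).le)]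
      refine Finset.prod_congr rfl fun ij _ => ?_
      rw [ENNReal.ofReal_inv_of_pos (hpos _), ENNReal.ofReal_sub _ (by positivity),
        ENNReal.ofReal_mul (by positivity), ENNReal.ofReal_mul hq0.le, ENNReal.ofReal_pow hq0.le,
        ENNReal.ofReal_one]
    simp_rw [e]
    refine tendsto_nhds_unique (tendsto_atTop_iSup ?_) ((ENNReal.continuous_ofReal.tendsto _).comp hlim)
    intro N K h
    refine ENNReal.ofReal_le_ofReal ?_
    refine Finset.prod_le_prod_of_subset_of_one_le
      (Finset.product_subset_product (Finset.range_mono h) (Finset.range_mono h)) ?_ ?_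
    · intro ij _
      exact (inv_pos.2 (hpos _)).le
    · intro ij _ _
      refine (one_le_inv₀ (hpos _)).2 ?_
      have : 0 < q * Q * q ^ (ij.1 + ij.2) := by positivity
      linarith
  have hT0 : 0 ≤ T := by
    refine ge_of_tendsto' hlim fun N => Finset.prod_nonneg fun ij _ => (inv_pos.2 (hpos _)).le
  rw [← ENNReal.toReal_ofReal hT0, ← hZ, ENNReal.tsum_toReal_eq]
  · refine tsum_congr fun π => ?_
    rw [ENNReal.toReal_mul, ENNReal.toReal_pow, ENNReal.toReal_pow,
      ENNReal.toReal_ofReal hq0.le, ENNReal.toReal_ofReal hQ0.le]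
  · intro π
    exact ENNReal.mul_ne_top (ENNReal.pow_ne_top ENNReal.ofReal_ne_top)
      (ENNReal.pow_ne_top ENNReal.ofReal_ne_top)
end

section
/- Setting Q = 1, the generating function of plane partitions by size is the MacMahon function: ∑_π q^{|π|} = ∏_{n=1}^∞ (1 - q^n)^{-n}. -/
open scoped ENNReal

namespace MacMahon

theorem cast_finsum {α : Type*} (f : α → ℕ) (hf : (Function.support f).Finite) :
    ((∑ᶠ i, f i : ℕ) : ℝ≥0∞) = ∑' i, (f i : ℝ≥0∞) := by
  rw [finsum_eq_sum f hf, tsum_eq_sum (s := hf.toFinset)]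
  · push_cast; rfl
  · intro b hb
    simpa using hb

/-- Partitions as weakly decreasing sequences with finite support. -/
@[ext]
structure Par where
  f : ℕ → ℕ
  anti : ∀ i, f (i + 1) ≤ f i
  fin : ∃ N, ∀ i, N ≤ i → f i = 0

noncomputable def Par.size (l : Par) : ℕ := ∑ᶠ i, l.f i

theorem Par.cast_size (l : Par) : (l.size : ℝ≥0∞) = ∑' i, (l.f i : ℝ≥0∞) := by
  apply cast_finsum
  obtain ⟨N, hN⟩ := l.fin
  apply (Set.finite_lt_nat N).subset
  intro i hi
  by_contra h
  exact hi (hN i (by simpa using h))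

def Par.empty : Par := ⟨fun _ => 0, fun _ => le_rfl, 0, fun _ _ => rfl⟩

theorem Par.size_empty : Par.empty.size = 0 := by simp [Par.size, Par.empty]

/-- Interlacing. -/
def Il (m l : Par) : Prop := ∀ i, m.f i ≤ l.f i ∧ l.f (i + 1) ≤ m.f i

theorem Il.size_le {m l : Par} (h : Il m l) : m.size ≤ l.size := by
  have : (m.size : ℝ≥0∞) ≤ l.size := by
    rw [Par.cast_size, Par.cast_size]
    exact ENNReal.tsum_le_tsum fun i => by exact_mod_cast (h i).1
  exact_mod_cast this

theorem il_empty {m : Par} : Il m Par.empty ↔ m = Par.empty := by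
  constructor
  · intro h
    ext i
    have := (h i).1
    simpa [Par.empty] using this
  · rintro rfl i
    simp [Par.empty]

theorem empty_il {t : Par} (h : Il Par.empty t) (i : ℕ) : t.f (i+1) = 0 := by
  have := (h i).2
  simpa [Par.empty] using this

/-- The local toggle bijection. -/
def upPar (r s t : Par) (e : ℕ) (h1 : Il t r) (h2 : Il t s) : Par where
  f i := match i with
    | 0 => max (r.f 0) (s.f 0) + e
    | i + 1 => min (r.f i) (s.f i) + max (r.f (i+1)) (s.f (i+1)) - t.f i
  anti i := by
    have a := h1 0; have b := h2 0
    cases i with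
    | zero => simp only []; omega
    | succ i =>
      have a := h1 i; have b := h2 i
      have a' := h1 (i+1); have b' := h2 (i+1)
      simp only []; omega
  fin := by
    obtain ⟨N, hN⟩ := r.fin
    obtain ⟨M, hM⟩ := s.fin
    refine ⟨N + M + 1, fun i hi => ?_⟩
    cases i with
    | zero => omega
    | succ i =>
      have := hN i (by omega)
      have := hM i (by omega)
      have := hN (i+1) (by omega)
      have := hM (i+1) (by omega)
      simp only []; omega

def downPar (r s n : Par) (h1 : Il r n) (h2 : Il s n) : Par where
  f i := min (r.f i) (s.f i) + max (r.f (i+1)) (s.f (i+1)) - n.f (i+1)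
  anti i := by
    have a := h1 i; have b := h2 i
    have a' := h1 (i+1); have b' := h2 (i+1)
    have a3 := h1 (i+1+1); have b3 := h2 (i+1+1)
    omega
  fin := by
    obtain ⟨N, hN⟩ := r.fin
    obtain ⟨M, hM⟩ := s.fin
    refine ⟨N + M, fun i hi => ?_⟩
    have := hN i (by omega)
    have := hM i (by omega)
    have := hN (i+1) (by omega)
    have := hM (i+1) (by omega)
    omega

def toggle (r s : Par) :
    {t : Par // Il t r ∧ Il t s} × ℕ ≃ {n : Par // Il r n ∧ Il s n} where
  toFun p := ⟨upPar r s p.1.1 p.2 p.1.2.1 p.1.2.2, by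
    obtain ⟨⟨t, h1, h2⟩, e⟩ := p
    constructor
    all_goals
      intro i
      have a := h1 i; have b := h2 i
      cases i with
      | zero => simp only [upPar]; omega
      | succ i =>
        have a' := h1 i; have b' := h2 i
        simp only [upPar]; omega⟩
  invFun n := ⟨⟨downPar r s n.1 n.2.1 n.2.2, by
    obtain ⟨n, h1, h2⟩ := n
    constructor
    all_goals
      intro i
      have a := h1 i; have b := h2 i
      have a' := h1 (i+1); have b' := h2 (i+1)
      simp only [downPar]; omega⟩, n.1.f 0 - max (r.f 0) (s.f 0)⟩
  left_inv p := by
    obtain ⟨⟨t, h1, h2⟩, e⟩ := p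
    ext i
    · have a := h1 i; have b := h2 i
      simp only [upPar, downPar]; omega
    · simp [upPar]
  right_inv n := by
    obtain ⟨n, h1, h2⟩ := n
    ext i
    have a := h1 i; have b := h2 i
    cases i with
    | zero => simp only [upPar]; omega
    | succ i =>
      have a' := h1 i; have b' := h2 i
      simp only [upPar, downPar]; omega

theorem toggle_size (r s : Par) (p : {t : Par // Il t r ∧ Il t s} × ℕ) :
    (toggle r s p).1.size + p.1.1.size = r.size + s.size + p.2 := by
  obtain ⟨⟨t, h1, h2⟩, e⟩ := p
  have key : (((toggle r s ⟨⟨t, h1, h2⟩, e⟩).1.size + t.size : ℕ) : ℝ≥0∞)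
      = ((r.size + s.size + e : ℕ) : ℝ≥0∞) := by
    push_cast
    simp only [Par.cast_size]
    rw [tsum_eq_zero_add' ENNReal.summable, add_assoc, ← ENNReal.tsum_add, ← ENNReal.tsum_add]
    have e1 : ∀ i, (((toggle r s ⟨⟨t, h1, h2⟩, e⟩).1.f (i+1) : ℕ) : ℝ≥0∞) + t.f i
        = ((min (r.f i) (s.f i) : ℕ) : ℝ≥0∞) + ((max (r.f (i+1)) (s.f (i+1)) : ℕ) : ℝ≥0∞) := by
      intro i
      have a := h1 i; have b := h2 i
      norm_cast
      simp only [toggle, upPar, Equiv.coe_fn_mk]; omega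
    have e2 : ∀ i, (r.f i : ℝ≥0∞) + s.f i
        = ((min (r.f i) (s.f i) : ℕ) : ℝ≥0∞) + ((max (r.f i) (s.f i) : ℕ) : ℝ≥0∞) := by
      intro i
      norm_cast; omega
    simp_rw [e1, e2]
    rw [ENNReal.tsum_add, ENNReal.tsum_add,
      tsum_eq_zero_add' (f := fun i => ((max (r.f i) (s.f i) : ℕ) : ℝ≥0∞)) ENNReal.summable]
    have e3 : (toggle r s ⟨⟨t, h1, h2⟩, e⟩).1.f 0 = max (r.f 0) (s.f 0) + e := rfl
    rw [e3]
    push_cast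
    ring
  exact_mod_cast key

open Classical in
noncomputable def K (y : ℝ≥0∞) (t r : Par) : ℝ≥0∞ :=
  if Il t r then y ^ (r.size - t.size) else 0

theorem K_comm (y : ℝ≥0∞) (r s : Par) :
    ∑' n, K y s n * K 1 r n = (1 - y)⁻¹ * ∑' t, K 1 t s * K y t r := by
  classical
  have L : ∑' n, K y s n * K 1 r n
      = ∑' n : {n : Par // Il r n ∧ Il s n}, y ^ (n.1.size - s.size) := by
    rw [← tsum_subtype_eq_of_support_subset (s := {n : Par | Il r n ∧ Il s n})]
    · apply tsum_congr
      rintro ⟨n, h1, h2⟩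
      simp [K, h1, h2]
    · intro n hn
      simp only [K, Function.mem_support] at hn
      by_contra h
      apply hn
      by_cases h1 : Il r n <;> by_cases h2 : Il s n <;> simp_all
  have R : ∑' t, K 1 t s * K y t r
      = ∑' t : {t : Par // Il t r ∧ Il t s}, y ^ (r.size - t.1.size) := by
    rw [← tsum_subtype_eq_of_support_subset (s := {t : Par | Il t r ∧ Il t s})]
    · apply tsum_congr
      rintro ⟨n, h1, h2⟩
      simp [K, h1, h2]
    · intro n hn
      simp only [K, Function.mem_support] at hn
      by_contra h
      apply hn
      by_cases h1 : Il n r <;> by_cases h2 : Il n s <;> simp_all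
  rw [L, R, ← (toggle r s).tsum_eq, ENNReal.tsum_prod', ← ENNReal.tsum_mul_left]
  apply tsum_congr
  intro t
  rw [← ENNReal.tsum_geometric, mul_comm, ← ENNReal.tsum_mul_left]
  apply tsum_congr
  intro e
  have h := toggle_size r s (t, e)
  have h1 := (toggle r s (t, e)).2.2.size_le
  have h2 := t.2.1.size_le
  simp only at h
  rw [← pow_add]
  congr 1
  omega

noncomputable def h (q : ℝ≥0∞) : ℕ → Par → ℝ≥0∞
  | 0, l => open Classical in if l = Par.empty then 1 else 0
  | m + 1, l => ∑' u, K 1 u l * (q ^ u.size * h q m u)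

theorem B_h (q : ℝ≥0∞) (m : ℕ) : ∀ (y : ℝ≥0∞) (t : Par),
    ∑' l, K y t l * h q m l = (∏ i ∈ Finset.range m, (1 - y * q ^ i)⁻¹) * h q m t := by
  classical
  induction m with
  | zero =>
    intro y t
    rw [tsum_eq_single Par.empty]
    · by_cases ht : t = Par.empty
      · subst ht; simp [K, h, il_empty]
      · simp [K, h, il_empty, ht]
    · intro l hl; simp [h, hl]
  | succ m ih =>
    intro y t
    calc ∑' l, K y t l * h q (m+1) l
        = ∑' l, ∑' u, (K y t l * K 1 u l) * (q ^ u.size * h q m u) := by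
          apply tsum_congr; intro l
          rw [h, ← ENNReal.tsum_mul_left]
          apply tsum_congr; intro u; ring
      _ = ∑' u, (∑' l, K y t l * K 1 u l) * (q ^ u.size * h q m u) := by
          rw [ENNReal.tsum_comm]
          apply tsum_congr; intro u
          rw [ENNReal.tsum_mul_right]
      _ = (1 - y)⁻¹ * ∑' u, ∑' v, K 1 v t * (q ^ v.size * (K (y * q) v u * h q m u)) := by
          rw [← ENNReal.tsum_mul_left]
          apply tsum_congr; intro u
          rw [K_comm, mul_assoc, ← ENNReal.tsum_mul_right]
          congr 1
          apply tsum_congr; intro v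
          by_cases hv : Il v u
          · have : q ^ u.size = q ^ v.size * q ^ (u.size - v.size) := by
              rw [← pow_add]; congr 1; have := hv.size_le; omega
            simp only [K, hv, if_true, this, mul_pow]
            ring
          · simp [K, hv]
      _ = (1 - y)⁻¹ * ∑' v, K 1 v t * (q ^ v.size * ∑' u, (K (y * q) v u * h q m u)) := by
          rw [ENNReal.tsum_comm]
          congr 1
          apply tsum_congr; intro v
          rw [ENNReal.tsum_mul_left, ENNReal.tsum_mul_left]
      _ = _ := by
          simp_rw [ih]
          rw [Finset.prod_range_succ', h, ← ENNReal.tsum_mul_left, ← ENNReal.tsum_mul_left]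
          apply tsum_congr; intro v
          simp only [pow_succ', pow_zero, mul_one, mul_assoc]
          ring

theorem h_empty (q : ℝ≥0∞) (m : ℕ) : h q m Par.empty = 1 := by
  classical
  induction m with
  | zero => simp [h]
  | succ m ih =>
    rw [h, tsum_eq_single Par.empty]
    · simp [K, il_empty, ih, Par.size_empty]
    · intro u hu
      simp [K, il_empty, hu]

theorem F_eq (q : ℝ≥0∞) (n m : ℕ) : ∀ t : ℕ,
    ∑' l, q ^ (t * l.size) * (h q m l * h q n l)
      = ∏ i ∈ Finset.range m, ∏ j ∈ Finset.range n, (1 - q ^ (t + i + j))⁻¹ := by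
  classical
  induction m with
  | zero =>
    intro t
    rw [tsum_eq_single Par.empty]
    · simp [h_empty, Par.size_empty]
    · intro l hl; simp [h, hl]
  | succ m ih =>
    intro t
    calc ∑' l, q ^ (t * l.size) * (h q (m+1) l * h q n l)
        = ∑' l, ∑' u, q ^ (t * l.size) * (K 1 u l * (q ^ u.size * h q m u) * h q n l) := by
          apply tsum_congr; intro l
          rw [h, ← ENNReal.tsum_mul_right, ← ENNReal.tsum_mul_left]
      _ = ∑' u, ∑' l, (q ^ ((t+1) * u.size) * h q m u) * (K (q ^ t) u l * h q n l) := by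
          rw [ENNReal.tsum_comm]
          apply tsum_congr; intro u
          apply tsum_congr; intro l
          by_cases hv : Il u l
          · have : q ^ (t * l.size) = q ^ (t * u.size) * (q ^ t) ^ (l.size - u.size) := by
              rw [← pow_mul, ← pow_add, ← mul_add]
              congr 2; have := hv.size_le; omega
            simp only [K, hv, if_true, this, one_pow]
            ring
          · simp [K, hv]
      _ = ∑' u, (∏ i ∈ Finset.range n, (1 - q ^ t * q ^ i)⁻¹) *
            (q ^ ((t+1) * u.size) * (h q m u * h q n u)) := by
          apply tsum_congr; intro u
          rw [ENNReal.tsum_mul_left, B_h]; ring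
      _ = _ := by
          rw [ENNReal.tsum_mul_left, ih, Finset.prod_range_succ', mul_comm]
          simp only [← pow_add]
          congr 1
          apply Finset.prod_congr rfl; intro i _
          apply Finset.prod_congr rfl; intro j _
          congr 3; ring

end MacMahon

namespace MacMahon
open Filter Topology

theorem box_bounds (g : ℕ → ℝ≥0∞) (hg : ∀ k, 1 ≤ g k) (n : ℕ) :
    ∏ k ∈ Finset.range n, g k ^ (k+1) ≤
      ∏ i ∈ Finset.range n, ∏ j ∈ Finset.range n, g (i + j) ∧
    ∏ i ∈ Finset.range n, ∏ j ∈ Finset.range n, g (i + j) ≤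
      ∏ k ∈ Finset.range (2 * n), g k ^ (k+1) := by
  have e : ∏ i ∈ Finset.range n, ∏ j ∈ Finset.range n, g (i + j)
      = ∏ k ∈ Finset.range (2 * n),
        g k ^ (({p ∈ Finset.range n ×ˢ Finset.range n | p.1 + p.2 = k}).card) := by
    rw [← Finset.prod_product', ← Finset.prod_fiberwise_of_maps_to (t := Finset.range (2*n))
      (g := fun p : ℕ × ℕ => p.1 + p.2)]
    · apply Finset.prod_congr rfl
      intro k _
      rw [← Finset.prod_const]
      apply Finset.prod_congr rfl
      intro p hp
      rw [(Finset.mem_filter.1 hp).2]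
    · intro p hp
      simp only [Finset.mem_product, Finset.mem_range] at hp ⊢
      omega
  rw [e]
  constructor
  · calc ∏ k ∈ Finset.range n, g k ^ (k+1) = ∏ k ∈ Finset.range n,
        g k ^ (({p ∈ Finset.range n ×ˢ Finset.range n | p.1 + p.2 = k}).card) := by
          apply Finset.prod_congr rfl
          intro k hk
          have e2 : {p ∈ Finset.range n ×ˢ Finset.range n | p.1 + p.2 = k}
              = Finset.HasAntidiagonal.antidiagonal k := by
            ext p
            simp only [Finset.HasAntidiagonal.mem_antidiagonal, Finset.mem_filter, Finset.mem_product,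
              Finset.mem_range] at hk ⊢
            omega
          rw [e2, Finset.Nat.card_antidiagonal]
      _ ≤ _ := by
          apply Finset.prod_le_prod_of_subset_of_one_le'
          · intro k; simp only [Finset.mem_range]; omega
          · intro k _ _
            exact one_le_pow₀ (hg k)
  · apply Finset.prod_le_prod'
    intro k _
    apply pow_le_pow_right₀ (hg k)
    rw [← Finset.Nat.card_antidiagonal]
    apply Finset.card_le_card
    intro p hp
    simpa using (Finset.mem_filter.1 hp).2

theorem mult (q : ℝ) (h0 : 0 < q) (h1 : q < 1) :
    Multipliable (fun n : ℕ => ((1 - q ^ (n + 1))⁻¹) ^ (n + 1)) := by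
  have hp : ∀ n : ℕ, 0 < 1 - q ^ (n+1) := fun n => by
    have := pow_lt_one₀ h0.le h1 (by omega : n + 1 ≠ 0)
    linarith
  apply Real.multipliable_of_summable_log
  · intro n
    exact pow_pos (inv_pos.2 (hp n)) _
  · have S : Summable (fun n : ℕ => (1 - q)⁻¹ * (((n+1 : ℕ) : ℝ) ^ 1 * q ^ (n+1))) := by
      apply Summable.mul_left
      exact (summable_nat_add_iff 1).2 (summable_pow_mul_geometric_of_norm_lt_one 1
        (by rw [Real.norm_eq_abs, abs_of_pos h0]; exact h1) :
          Summable (fun n : ℕ => ((n : ℝ) ^ 1 * q ^ n)))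
    refine Summable.of_nonneg_of_le (fun n => ?_) (fun n => ?_) S
    · apply Real.log_nonneg
      apply one_le_pow₀
      rw [one_le_inv₀ (hp n)]
      have := pow_pos h0 (n+1)
      linarith
    · rw [Real.log_pow]
      have l1 := Real.log_le_sub_one_of_pos (inv_pos.2 (hp n))
      have l2 : (1 - q ^ (n+1))⁻¹ - 1 = q ^ (n+1) * (1 - q ^ (n+1))⁻¹ := by
        have := (hp n).ne'
        field_simp; ring
      have l3 : (1 - q ^ (n+1))⁻¹ ≤ (1-q)⁻¹ := by
        apply inv_anti₀ (by linarith)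
        have := pow_le_of_le_one h0.le h1.le (by omega : n + 1 ≠ 0)
        linarith
      calc _ ≤ ((n+1 : ℕ) : ℝ) * (q ^ (n+1) * (1-q)⁻¹) := by
            apply mul_le_mul_of_nonneg_left _ (by positivity)
            refine l1.trans ?_
            rw [l2]
            exact mul_le_mul_of_nonneg_left l3 (by positivity)
        _ = _ := by ring

/-- Chains of interlacing partitions starting at `l`, vanishing from step `m` on. -/
def C (m : ℕ) (l : Par) : Type :=
  {c : ℕ → Par // c 0 = l ∧ (∀ k, Il (c (k+1)) (c k)) ∧ c m = Par.empty}

noncomputable def wt (m : ℕ) (c : ℕ → Par) : ℕ := ∑ k ∈ Finset.range m, (c (k+1)).size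

def Csucc (m : ℕ) (l : Par) : C (m+1) l ≃ Σ u : {u : Par // Il u l}, C m u.1 where
  toFun c := ⟨⟨c.1 1, by have := c.2.2.1 0; rwa [c.2.1] at this⟩,
    ⟨fun k => c.1 (k+1), rfl, fun k => c.2.2.1 (k+1), c.2.2.2⟩⟩
  invFun p := ⟨fun k => match k with
      | 0 => l
      | k + 1 => p.2.1 k, rfl, fun k => by
        cases k with
        | zero => have := p.1.2; rw [← p.2.2.1] at this; exact this
        | succ k => exact p.2.2.2.1 k, p.2.2.2.2⟩
  left_inv c := by
    apply Subtype.ext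
    funext k
    cases k with
    | zero => exact c.2.1.symm
    | succ k => rfl
  right_inv p := by
    obtain ⟨⟨u, hu⟩, ⟨c, hc, h2, h3⟩⟩ := p
    dsimp only at hc
    subst hc
    rfl

theorem h_eq (q : ℝ≥0∞) (m : ℕ) : ∀ l, h q m l = ∑' c : C m l, q ^ wt m c.1 := by
  classical
  induction m with
  | zero =>
    intro l
    by_cases hl : l = Par.empty
    · have hu : Unique (C 0 l) :=
        { default := ⟨fun _ => Par.empty, hl.symm, fun _ => il_empty.2 rfl, rfl⟩
          uniq := by
            intro c
            apply Subtype.ext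
            funext k
            change c.1 k = Par.empty
            induction k with
            | zero => exact c.2.2.2
            | succ k ih =>
              have := c.2.2.1 k
              rw [ih] at this
              exact il_empty.1 this }
      rw [tsum_eq_single default (fun b hb => (hb (Subsingleton.elim _ _)).elim)]
      simp [h, hl, wt]
    · have : IsEmpty (C 0 l) := ⟨fun c => hl (c.2.1.symm.trans c.2.2.2)⟩
      simp [h, hl]
  | succ m ih =>
    intro l
    rw [← (Csucc m l).symm.tsum_eq, ENNReal.tsum_sigma', h,
      ← tsum_subtype_eq_of_support_subset (s := {u : Par | Il u l})]
    · apply tsum_congr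
      rintro ⟨u, hu⟩
      have hu' : Il u l := hu
      simp only [K, hu', if_true, one_pow, one_mul, ih]
      rw [← ENNReal.tsum_mul_left]
      apply tsum_congr
      intro c
      rw [← pow_add]
      congr 1
      rw [wt, wt, Finset.sum_range_succ', add_comm]
      congr 1
      change u.size = (c.1 0).size
      rw [c.2.1]
    · intro u hu
      by_contra hn
      have hn' : ¬ Il u l := hn
      simp [K, hn'] at hu

theorem C.zero {m : ℕ} {l : Par} (c : C m l) (k : ℕ) (hk : m ≤ k) : c.1 k = Par.empty := by
  induction k, hk using Nat.le_induction with
  | base => exact c.2.2.2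
  | succ k hk ih =>
    have := c.2.2.1 k
    rw [ih] at this
    exact il_empty.1 this

theorem C.le {m : ℕ} {l : Par} (c : C m l) (k i : ℕ) : (c.1 k).f i ≤ l.f i := by
  induction k with
  | zero => rw [c.2.1]
  | succ k ih => exact ((c.2.2.1 k i).1).trans ih

theorem C.wt_eq {m : ℕ} {l : Par} (c : C m l) :
    (wt m c.1 : ℝ≥0∞) = ∑' p : ℕ × ℕ, (((c.1 (p.1 + 1)).f p.2 : ℕ) : ℝ≥0∞) := by
  rw [ENNReal.tsum_prod', tsum_eq_sum (s := Finset.range m)]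
  · rw [wt]; push_cast
    simp only [Par.cast_size]
  · intro k hk
    dsimp only
    rw [c.zero (k+1) (by simp at hk; omega)]
    simp [Par.empty]

/-- Splitting of the quadrant in diagonals. -/
def quad : ℕ ⊕ (ℕ × ℕ) ⊕ (ℕ × ℕ) → ℕ × ℕ
  | .inl i => (i, i)
  | .inr (.inl (k, i)) => (i, i + (k + 1))
  | .inr (.inr (k, i)) => (i + (k + 1), i)

theorem quad_bij : Function.Bijective quad := by
  constructor
  · rintro (i | ⟨k, i⟩ | ⟨k, i⟩) (j | ⟨l, j⟩ | ⟨l, j⟩) hij <;>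
      simp only [quad, Prod.mk.injEq] at hij <;> simp <;> omega
  · rintro ⟨i, j⟩
    rcases lt_trichotomy i j with hh | hh | hh
    · refine ⟨.inr (.inl (j - i - 1, i)), ?_⟩
      simp only [quad, Prod.mk.injEq, true_and]; omega
    · exact ⟨.inl i, by simp [quad, hh]⟩
    · refine ⟨.inr (.inr (i - j - 1, j)), ?_⟩
      simp only [quad, Prod.mk.injEq, and_true]; omega

theorem PP_zero_row (π : PlanePartition) (n i j : ℕ) (hz : π.part n 0 = 0) (hi : n ≤ i) :
    π.part i j = 0 := by
  have h1 : π.part i 0 = 0 := by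
    have := antitone_nat_of_succ_le (f := fun i => π.part i 0) (fun i => π.row_antitone i 0) hi
    simp only at this; omega
  have := antitone_nat_of_succ_le (f := fun j => π.part i j) (fun j => π.col_antitone i j)
    (Nat.zero_le j)
  simp only at this; omega

theorem PP_zero_col (π : PlanePartition) (n i j : ℕ) (hz : π.part 0 n = 0) (hj : n ≤ j) :
    π.part i j = 0 := by
  have h1 : π.part 0 j = 0 := by
    have := antitone_nat_of_succ_le (f := fun j => π.part 0 j) (fun j => π.col_antitone 0 j) hj
    simp only at this; omega
  have := antitone_nat_of_succ_le (f := fun i => π.part i j) (fun i => π.row_antitone i j)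
    (Nat.zero_le i)
  simp only at this; omega

theorem PP_bound (π : PlanePartition) : ∃ N, ∀ i j, N ≤ i ∨ N ≤ j → π.part i j = 0 := by
  obtain ⟨⟨A, B⟩, hN⟩ := π.support_finite.bddAbove
  refine ⟨A + B + 1, fun i j hij => ?_⟩
  by_contra hne
  have := hN (show (i, j) ∈ _ from hne)
  simp only [Prod.mk_le_mk] at this
  omega

def rdiag (π : PlanePartition) (k : ℕ) : Par where
  f i := π.part i (i + k)
  anti i := by
    have a := π.row_antitone i (i + k)
    have b := π.col_antitone (i+1) (i+k)
    rw [show i + 1 + k = i + k + 1 by ring]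
    omega
  fin := by
    obtain ⟨N, hN⟩ := PP_bound π
    exact ⟨N, fun i hi => hN _ _ (Or.inl hi)⟩

def ldiag (π : PlanePartition) (k : ℕ) : Par where
  f i := π.part (i + k) i
  anti i := by
    have a := π.row_antitone (i+k) i
    have b := π.col_antitone (i+k+1) i
    rw [show i + 1 + k = i + k + 1 by ring]
    omega
  fin := by
    obtain ⟨N, hN⟩ := PP_bound π
    exact ⟨N, fun i hi => hN _ _ (Or.inr hi)⟩

def glue {m n : ℕ} (p : Σ l : Par, C m l × C n l) : PlanePartition where
  part i j := if i ≤ j then (p.2.1.1 (j - i)).f i else (p.2.2.1 (i - j)).f j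
  row_antitone i j := by
    obtain ⟨l, c, d⟩ := p
    dsimp only
    rcases lt_trichotomy i j with hh | hh | hh
    · obtain ⟨k, rfl⟩ := Nat.exists_eq_add_of_lt hh
      rw [if_pos (by omega), if_pos (by omega), show i + k + 1 - (i + 1) = k by omega,
        show i + k + 1 - i = k + 1 by omega]
      exact (c.2.2.1 k i).2
    · subst hh
      rw [if_neg (by omega), if_pos le_rfl, show i - i = 0 by omega, c.2.1]
      exact d.le _ _
    · obtain ⟨k, rfl⟩ := Nat.exists_eq_add_of_lt hh
      rw [if_neg (by omega), if_neg (by omega), show j + k + 1 + 1 - j = k + 1 + 1 by omega,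
        show j + k + 1 - j = k + 1 by omega]
      exact (d.2.2.1 (k+1) j).1
  col_antitone i j := by
    obtain ⟨l, c, d⟩ := p
    dsimp only
    rcases lt_trichotomy i j with hh | hh | hh
    · obtain ⟨k, rfl⟩ := Nat.exists_eq_add_of_lt hh
      rw [if_pos (by omega), if_pos (by omega), show i + k + 1 + 1 - i = k + 1 + 1 by omega,
        show i + k + 1 - i = k + 1 by omega]
      exact (c.2.2.1 (k+1) i).1
    · subst hh
      rw [if_pos (by omega), if_pos le_rfl, show i - i = 0 by omega, c.2.1]
      exact c.le _ _
    · obtain ⟨k, rfl⟩ := Nat.exists_eq_add_of_lt hh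
      rcases Nat.eq_zero_or_pos k with rfl | hk
      · rw [if_pos (by omega), if_neg (by omega), show j + 0 + 1 - (j + 1) = 0 by omega,
          show j + 0 + 1 - j = 0 + 1 by omega, c.2.1]
        have := (d.2.2.1 0 j).2
        rw [d.2.1] at this
        exact this
      · rw [if_neg (by omega), if_neg (by omega), show j + k + 1 - (j + 1) = k by omega,
          show j + k + 1 - j = k + 1 by omega]
        exact (d.2.2.1 k j).2
  support_finite := by
    obtain ⟨l, c, d⟩ := p
    obtain ⟨N, hN⟩ := l.fin
    apply (Set.finite_Iic ((N + n, N + m) : ℕ × ℕ)).subset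
    rintro ⟨i, j⟩ hij
    simp only [Function.mem_support] at hij
    simp only [Set.mem_Iic, Prod.mk_le_mk]
    by_contra hne
    apply hij
    split_ifs with hle
    · by_cases hm : m ≤ j - i
      · rw [c.zero _ hm]; rfl
      · have := c.le (j - i) i
        have := hN i (by omega)
        omega
    · by_cases hm : n ≤ i - j
      · rw [d.zero _ hm]; rfl
      · have := d.le (i - j) j
        have := hN j (by omega)
        omega

theorem glue_r {m n : ℕ} (p : Σ l : Par, C m l × C n l) (i k : ℕ) :
    (glue p).part i (i + k) = (p.2.1.1 k).f i := by
  simp [glue]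

theorem glue_l {m n : ℕ} (p : Σ l : Par, C m l × C n l) (i k : ℕ) :
    (glue p).part (i + k) i = (p.2.2.1 k).f i := by
  rcases Nat.eq_zero_or_pos k with rfl | hk
  · simp [glue, p.2.1.2.1, p.2.2.2.1]
  · simp only [glue]
    rw [if_neg (by omega), show i + k - i = k by omega]

theorem glue_size {m n : ℕ} (p : Σ l : Par, C m l × C n l) :
    (glue p).size = p.1.size + (wt m p.2.1.1 + wt n p.2.2.1) := by
  have key : ((glue p).size : ℝ≥0∞) = ((p.1.size + (wt m p.2.1.1 + wt n p.2.2.1) : ℕ) : ℝ≥0∞) := by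
    rw [PlanePartition.size, cast_finsum _ (glue p).support_finite,
      ← (Equiv.ofBijective quad quad_bij).tsum_eq,
      Summable.tsum_sum ENNReal.summable ENNReal.summable,
      Summable.tsum_sum ENNReal.summable ENNReal.summable]
    push_cast
    rw [p.2.1.wt_eq, p.2.2.wt_eq, Par.cast_size]
    congr 1
    · apply tsum_congr; intro i
      have := glue_r p i 0
      rw [p.2.1.2.1] at this
      simp only [Equiv.ofBijective_apply, quad]
      rw [← this]; rfl
    · congr 1
      · apply tsum_congr; rintro ⟨k, i⟩
        simp only [Equiv.ofBijective_apply, quad, glue_r]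
      · apply tsum_congr; rintro ⟨k, i⟩
        simp only [Equiv.ofBijective_apply, quad, glue_l]
  exact_mod_cast key

def cut (m n : ℕ) (π : PlanePartition) (hm : π.part 0 m = 0) (hn : π.part n 0 = 0) :
    Σ l : Par, C m l × C n l :=
  ⟨rdiag π 0,
    ⟨rdiag π, rfl, fun k i => ⟨π.col_antitone i (i+k), by
        have := π.row_antitone i (i + 1 + k)
        simpa [rdiag, add_assoc, add_comm, add_left_comm] using this⟩, by
        ext i
        exact PP_zero_col π m _ _ hm (by omega)⟩,
    ⟨ldiag π, rfl, fun k i => ⟨π.row_antitone (i+k) i, by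
        have := π.col_antitone (i + 1 + k) i
        simpa [ldiag, add_assoc, add_comm, add_left_comm] using this⟩, by
        ext i
        exact PP_zero_row π n _ _ hn (by omega)⟩⟩

theorem PP_ext {π ρ : PlanePartition} (h : ∀ i j, π.part i j = ρ.part i j) : π = ρ := by
  cases π; cases ρ
  congr
  funext i j
  exact h i j

theorem glue_inj (m n : ℕ) :
    Function.Injective (glue : (Σ l : Par, C m l × C n l) → PlanePartition) := by
  intro p p' hp
  have e1 : p.2.1.1 = p'.2.1.1 := by
    funext k; ext i; rw [← glue_r, ← glue_r, hp]
  have e2 : p.2.2.1 = p'.2.2.1 := by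
    funext k; ext i; rw [← glue_l, ← glue_l, hp]
  obtain ⟨l, ⟨c, rfl, hc⟩, ⟨d, hd, hd'⟩⟩ := p
  obtain ⟨l', ⟨c', rfl, hc'⟩, ⟨d', hf1, hf2⟩⟩ := p'
  dsimp only at e1 e2
  subst e1; subst e2
  rfl

theorem glue_cut (m n : ℕ) (π : PlanePartition) (hm : π.part 0 m = 0) (hn : π.part n 0 = 0) :
    glue (cut m n π hm hn) = π := by
  apply PP_ext
  intro i j
  rcases le_total i j with hh | hh
  · obtain ⟨k, rfl⟩ := Nat.exists_eq_add_of_le hh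
    rw [glue_r]; rfl
  · obtain ⟨k, rfl⟩ := Nat.exists_eq_add_of_le hh
    rw [glue_l]; rfl

theorem tsum_chain (q : ℝ≥0∞) (m n : ℕ) :
    ∑' p : (Σ l : Par, C m l × C n l), q ^ (glue p).size
      = ∏ i ∈ Finset.range m, ∏ j ∈ Finset.range n, (1 - q ^ (i + j + 1))⁻¹ := by
  have := F_eq q n m 1
  rw [show (∏ i ∈ Finset.range m, ∏ j ∈ Finset.range n, (1 - q ^ (i + j + 1))⁻¹)
    = ∏ i ∈ Finset.range m, ∏ j ∈ Finset.range n, (1 - q ^ (1 + i + j))⁻¹ from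
      Finset.prod_congr rfl fun i _ => Finset.prod_congr rfl fun j _ => by
        rw [show i + j + 1 = 1 + i + j by ring], ← this, ENNReal.tsum_sigma']
  apply tsum_congr; intro l
  rw [ENNReal.tsum_prod', h_eq, h_eq, one_mul, ← ENNReal.tsum_mul_right, ← ENNReal.tsum_mul_left]
  apply tsum_congr; intro c
  rw [← ENNReal.tsum_mul_left, ← ENNReal.tsum_mul_left]
  apply tsum_congr; intro d
  rw [glue_size, pow_add, pow_add]

end MacMahon

open MacMahon Filter Topology in
/-- MacMahon's formula: the generating function of plane partitions by size is
`∏_{n ≥ 1} (1 - qⁿ)⁻ⁿ`. -/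
theorem planePartition_macmahon (q : ℝ) (hq : q ∈ Set.Ioo (0 : ℝ) 1) :
    ∑' π : PlanePartition, q ^ π.size
      = ∏' n : ℕ, ((1 - q ^ (n + 1))⁻¹) ^ (n + 1) := by
  obtain ⟨h0, h1⟩ := hq
  have hp : ∀ n : ℕ, 0 < 1 - q ^ (n+1) := fun n => by
    have := pow_lt_one₀ h0.le h1 (by omega : n + 1 ≠ 0)
    linarith
  set P := ∏' n : ℕ, ((1 - q ^ (n + 1))⁻¹) ^ (n + 1) with hP
  set x : ENNReal := ENNReal.ofReal q with hx
  let g : ℕ → ENNReal := fun k => (1 - x ^ (k+1))⁻¹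
  have hg : ∀ k, 1 ≤ g k := fun k => by
    simp only [g]
    rw [ENNReal.one_le_inv]
    exact tsub_le_self
  have gr : ∀ k, g k = ENNReal.ofReal ((1 - q ^ (k+1))⁻¹) := fun k => by
    rw [ENNReal.ofReal_inv_of_pos (hp k), ENNReal.ofReal_sub _ (by positivity),
      ENNReal.ofReal_one, ENNReal.ofReal_pow h0.le]
  have T : Tendsto (fun n => ∏ k ∈ Finset.range n, g k ^ (k+1)) atTop (𝓝 (ENNReal.ofReal P)) := by
    have t := (ENNReal.continuous_ofReal.tendsto _).comp
      (mult q h0 h1).hasProd.tendsto_prod_nat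
    refine t.congr fun n => ?_
    simp only [Function.comp]
    rw [ENNReal.ofReal_prod_of_nonneg (fun k _ => by have := hp k; positivity)]
    apply Finset.prod_congr rfl
    intro k _
    rw [gr, ENNReal.ofReal_pow (inv_nonneg.2 (hp k).le)]
  have Tm : Monotone (fun n => ∏ k ∈ Finset.range n, g k ^ (k+1)) := by
    intro a b hab
    apply Finset.prod_le_prod_of_subset_of_one_le'
    · exact Finset.range_mono hab
    · intro k _ _
      exact one_le_pow₀ (hg k)
  have S : ∑' π : PlanePartition, x ^ π.size = ENNReal.ofReal P := by
    apply le_antisymm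
    · rw [ENNReal.tsum_eq_iSup_sum]
      apply iSup_le
      intro s
      have hN : ∃ N, ∀ π ∈ s, ∀ i j, N ≤ i ∨ N ≤ j → π.part i j = 0 := by
        choose f hf using PP_bound
        refine ⟨s.sup f, fun π hπ i j hij => hf π i j ?_⟩
        have := Finset.le_sup (f := f) hπ
        omega
      obtain ⟨N, hN⟩ := hN
      calc ∑ π ∈ s, x ^ π.size
          = ∑' π : s, x ^ π.1.size := (Finset.tsum_subtype s (fun π => x ^ π.size)).symm
        _ = ∑' π : s, x ^ (glue (cut N N π.1 (hN _ π.2 _ _ (Or.inr le_rfl))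
              (hN _ π.2 _ _ (Or.inl le_rfl)))).size := by
            simp only [glue_cut]
        _ ≤ ∑' p : (Σ l : Par, C N l × C N l), x ^ (glue p).size := by
            refine ENNReal.tsum_comp_le_tsum_of_injective (f := fun π : s =>
              cut N N π.1 (hN _ π.2 _ _ (Or.inr le_rfl)) (hN _ π.2 _ _ (Or.inl le_rfl))) ?_
              (fun p => x ^ (glue p).size)
            intro a b hab
            have := congrArg glue hab
            simp only [glue_cut] at this
            exact Subtype.ext this
        _ ≤ _ := by
            rw [tsum_chain]
            exact ((box_bounds g hg N).2).trans (Tm.ge_of_tendsto T _)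
    · refine le_of_tendsto' T fun n => ?_
      refine ((box_bounds g hg n).1).trans ?_
      have := tsum_chain x n n
      simp only [g]
      rw [← this]
      exact ENNReal.tsum_comp_le_tsum_of_injective (glue_inj n n)
        (fun π : PlanePartition => x ^ π.size)
  have hP0 : 0 ≤ P := by
    refine ge_of_tendsto' (mult q h0 h1).hasProd.tendsto_prod_nat fun n => ?_
    exact Finset.prod_nonneg fun k _ => pow_nonneg (inv_nonneg.2 (hp k).le) _
  have R := congrArg ENNReal.toReal S
  rw [ENNReal.toReal_ofReal hP0, ENNReal.tsum_toReal_eq (fun π => by simp [hx])] at R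
  rw [← R]
  apply tsum_congr; intro π
  rw [ENNReal.toReal_pow, hx, ENNReal.toReal_ofReal h0.le]
end
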